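/- Let G be the symmetric group on three letters and let s : G → ℤ/2 be the sign homomorphism. Define ψ₀ : G × G → ℂˣ by ψ₀(g, h) = -1 if g and h are both odd permutations, and ψ₀(g, h) = 1 otherwise. Then: ψ₀ is a twisted 2-cocycle with respect to s; ψ₀ is not a twisted 2-coboundary; and every twisted 2-cocycle on G with respect to s is cohomologous to the constant function 1 or to ψ₀. (Equivalently, H²(S₃ᵀ, ℂˣ_T) ≅ ℤ/2 for the anti-linear group S₃ᵀ = ℤ₃ ⋊ ℤ₂ᵀ: there are exactly two S₃ᵀ-SPT phases, the trivial one and the Haldane chain protected by the ℤ₂ᵀ subgroup.) -/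

import Mathlib

noncomputable section

/-- Complex conjugation on the group of units `ℂˣ`. -/
def conjUnits : ℂˣ →* ℂˣ := Units.map (starRingEnd ℂ).toMonoidHom

/-- The symmetric group on three letters. -/
abbrev S3 := Equiv.Perm (Fin 3)

/-- The sign homomorphism `S₃ → ℤ/2` (odd permutations map to `1`). -/
def s : S3 → ZMod 2 := fun g => if Equiv.Perm.sign g = 1 then 0 else 1

/-- The twisted action of `g ∈ S₃` on `ℂˣ`: trivial if `s g = 0` (even permutations),
complex conjugation otherwise. -/
def tAct (g : S3) (z : ℂˣ) : ℂˣ := if s g = 0 then z else conjUnits z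

/-- Twisted 2-cocycle condition on `S₃` with respect to the sign grading `s`. -/
def IsTwisted2Cocycle (ψ : S3 → S3 → ℂˣ) : Prop :=
  ∀ g₁ g₂ g₃,
    tAct g₁ (ψ g₂ g₃) * ψ g₁ (g₂ * g₃) = ψ (g₁ * g₂) g₃ * ψ g₁ g₂

/-- Twisted 2-coboundary condition on `S₃` with respect to the sign grading `s`. -/
def IsTwisted2Coboundary (ψ : S3 → S3 → ℂˣ) : Prop :=
  ∃ β : S3 → ℂˣ, ∀ g₁ g₂,
    ψ g₁ g₂ = tAct g₁ (β g₂) * (β (g₁ * g₂))⁻¹ * β g₁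

/-- Two twisted 2-cochains are cohomologous if their pointwise quotient is a twisted
2-coboundary. -/
def Cohomologous (ψ ψ' : S3 → S3 → ℂˣ) : Prop :=
  IsTwisted2Coboundary fun g₁ g₂ => ψ g₁ g₂ * (ψ' g₁ g₂)⁻¹

/-- The nontrivial `S₃ᵀ`-SPT cocycle: `ψ₀(g, h) = -1` if `g` and `h` are both odd
permutations, and `1` otherwise. -/
def ψ₀ : S3 → S3 → ℂˣ := fun g h =>
  if Equiv.Perm.sign g = -1 ∧ Equiv.Perm.sign h = -1 then -1 else 1

/-!
Let `N` be the kernel of the sign and `τ` an odd element of order two. If the restriction of a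
2-cocycle to a subgroup `H` of index `k` is a coboundary, then so is its `k`-th power: normalize it
to be trivial on `G × H`, so that it depends on its second argument only modulo `H`, and take the
product over `G ⧸ H`. As `N` and `⟨τ⟩` have coprime indices, a class is trivial as soon as its
restrictions to both of these cyclic groups are. A 2-cocycle on a cyclic group of order `n` is a
coboundary iff the scalar that `uⁿ` defines, for a lift `u` of a generator to the associated
extension, is a norm. On `N`, which acts trivially on `ℂˣ`, norms are `n`-th powers and there is no
obstruction. On `⟨τ⟩` the scalar is real and norms are the positive reals, so the only obstruction
is its sign, and `ψ₀` is a cocycle with scalar `-1`.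
-/

open groupCohomology

section Cochains

variable {G M : Type*} [Group G] [CommGroup M] [MulDistribMulAction G M] {f f' : G × G → M}

theorem isMulCocycle₂_div (hf : IsMulCocycle₂ f) (hf' : IsMulCocycle₂ f') :
    IsMulCocycle₂ (f / f') := fun g h j ↦ by
  simp only [Pi.div_apply, smul_div', div_mul_div_comm, hf g h j, hf' g h j]

/-- The differential from 1-cochains to 2-cochains, written multiplicatively and with the sign
convention of `IsMulCoboundary₂`. -/
def mulD₁₂ : (G → M) →* (G × G → M) where
  toFun β p := p.1 • β p.2 / β (p.1 * p.2) * β p.1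
  map_one' := by ext; simp
  map_mul' β γ := by
    ext
    simp only [Pi.mul_apply, smul_mul', mul_div_mul_comm, mul_mul_mul_comm]

theorem mulD₁₂_apply (β : G → M) (g h : G) :
    mulD₁₂ β (g, h) = g • β h / β (g * h) * β g := rfl

theorem mem_range_mulD₁₂ : f ∈ (mulD₁₂ (G := G) (M := M)).range ↔ IsMulCoboundary₂ f := by
  simp only [MonoidHom.mem_range, IsMulCoboundary₂, funext_iff, Prod.forall, mulD₁₂_apply]

theorem isMulCocycle₂_div_mulD₁₂ (hf : IsMulCocycle₂ f) (β : G → M) :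
    IsMulCocycle₂ (f / mulD₁₂ β) :=
  isMulCocycle₂_div hf fun g h j ↦ by
    have h_comm (a b c d x y : M) : a / x * b * (c / b * d) = a / y * c * (y / x * d) := by
      rw [← mul_assoc, ← mul_assoc, mul_assoc (a / x), mul_div_cancel, mul_right_comm (a / y),
        div_mul_div_cancel]
    simp only [mulD₁₂_apply, smul_mul', smul_div', mul_smul, mul_assoc g h j]
    exact h_comm ..

theorem isMulCoboundary₂_div_mulD₁₂_iff (β : G → M) :
    IsMulCoboundary₂ (f / mulD₁₂ β) ↔ IsMulCoboundary₂ f := by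
  simp only [← mem_range_mulD₁₂]
  rw [div_eq_mul_inv]
  exact Subgroup.mul_mem_cancel_right _ (inv_mem ⟨β, rfl⟩)

theorem isMulCoboundary₂_of_pow_of_pow {m n : ℕ} (hmn : m.Coprime n)
    (hm : IsMulCoboundary₂ (f ^ m)) (hn : IsMulCoboundary₂ (f ^ n)) : IsMulCoboundary₂ f := by
  simp only [← mem_range_mulD₁₂, ← QuotientGroup.eq_one_iff, QuotientGroup.mk_pow] at *
  simpa [hmn] using pow_gcd_eq_one.2 ⟨hm, hn⟩

end Cochains

section Transfer

variable {G M : Type*} [Group G] [CommGroup M] [MulDistribMulAction G M] {f : G × G → M}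
  {H K : Subgroup G}

/-- The restriction of a 2-cochain on `G` to a subgroup `H`. -/
def restrictCochain (H : Subgroup G) (f : G × G → M) : H × H → M := fun p ↦ f (p.1, p.2)

theorem isMulCocycle₂_restrictCochain (hf : IsMulCocycle₂ f) (H : Subgroup G) :
    IsMulCocycle₂ (restrictCochain H f) := fun g h j ↦ hf g h j

theorem exists_div_mulD₁₂_eq_one_of_restrictCochain
    (hres : IsMulCoboundary₂ (restrictCochain H f)) :
    ∃ γ : G → M, ∀ h ∈ H, ∀ k ∈ H, (f / mulD₁₂ γ) (h, k) = 1 := by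
  classical
  obtain ⟨γ, hγ⟩ := hres
  refine ⟨fun g ↦ if hg : g ∈ H then γ ⟨g, hg⟩ else 1, fun h hh k hk ↦ ?_⟩
  have hγ_hk : h • γ ⟨k, hk⟩ / γ ⟨h * k, mul_mem hh hk⟩ * γ ⟨h, hh⟩ = f (h, k) :=
    hγ ⟨h, hh⟩ ⟨k, hk⟩
  simp only [Pi.div_apply, mulD₁₂_apply, hh, hk, mul_mem hh hk, dite_true, hγ_hk, div_self']

theorem exists_div_mulD₁₂_eq_one_right_of_eq_one (hf : IsMulCocycle₂ f)
    (hone : ∀ h ∈ H, ∀ k ∈ H, f (h, k) = 1) :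
    ∃ β : G → M, ∀ x, ∀ h ∈ H, (f / mulD₁₂ β) (x, h) = 1 := by
  let t (x : G) : G := (x : G ⧸ H).out
  have ht (x : G) : (t x)⁻¹ * x ∈ H := QuotientGroup.eq.1 (x : G ⧸ H).out_eq
  have ht_mul (x h : G) (hh : h ∈ H) : t (x * h) = t x := by
    simp only [t, QuotientGroup.mk_mul_of_mem x hh]
  have hβ_H (h : G) (hh : h ∈ H) : f (t h, (t h)⁻¹ * h) = 1 :=
    hone _ (by simpa using mul_mem hh (inv_mem (ht h))) _ (ht h)
  -- In the extension of `G` by `M` this replaces the lift of `x = t k` by the product of the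
  -- lifts of the representative `t` of `x H` and of `k ∈ H`.
  refine ⟨fun x ↦ (f (t x, (t x)⁻¹ * x))⁻¹, fun x h hh ↦ ?_⟩
  have hcocycle := hf (t x) ((t x)⁻¹ * x) h
  rw [hone _ (ht x) h hh, smul_one, one_mul, mul_inv_cancel_left] at hcocycle
  simp only [Pi.div_apply, mulD₁₂_apply, ht_mul x h hh, hβ_H h hh, inv_one, smul_one, ← mul_assoc,
    one_div, inv_inv, div_eq_one]
  rw [mul_assoc] at hcocycle ⊢
  rw [← hcocycle, mul_inv_cancel_right]

theorem isMulCoboundary₂_pow_index_of_eq_one_right [H.FiniteIndex] (hf : IsMulCocycle₂ f)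
    (hone : ∀ x, ∀ h ∈ H, f (x, h) = 1) : IsMulCoboundary₂ (f ^ H.index) := by
  have := H.fintypeQuotientOfFiniteIndex
  have f_mul_right (x y h : G) (hh : h ∈ H) : f (x, y * h) = f (x, y) := by
    simpa only [hone _ h hh, smul_one, one_mul] using (hf x y h).symm
  let F (x : G) (q : G ⧸ H) : M := f (x, q.out)
  have hF (x y : G) : F x y = f (x, y) := by
    obtain ⟨h, hy⟩ := QuotientGroup.mk_out_eq_mul H y
    simp only [F, hy, f_mul_right x y h h.2]
  have hcocycle (g h : G) (q : G ⧸ H) : g • F h q * F g (h • q) / F (g * h) q = f (g, h) := by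
    induction q using QuotientGroup.induction_on with | H y => ?_
    rw [MulAction.Quotient.smul_coe, smul_eq_mul, hF, hF, hF, ← hf g h y, mul_div_cancel_left]
  refine ⟨fun x ↦ ∏ q, F x q, fun g h ↦ ?_⟩
  beta_reduce
  calc (g • ∏ q, F h q) / (∏ q, F (g * h) q) * ∏ q, F g q
      = ∏ q, g • F h q * F g (h • q) / F (g * h) q := by
        rw [Finset.prod_div_distrib, Finset.prod_mul_distrib, Finset.smul_prod',
          ← Equiv.prod_comp (MulAction.toPerm h) (F g), div_mul_eq_mul_div]
        rfl
    _ = (f ^ H.index) (g, h) := by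
        simp only [hcocycle, Finset.prod_const, Finset.card_univ, Pi.pow_apply,
          Subgroup.index_eq_card, Nat.card_eq_fintype_card]

theorem isMulCoboundary₂_pow_index [H.FiniteIndex] (hf : IsMulCocycle₂ f)
    (hres : IsMulCoboundary₂ (restrictCochain H f)) : IsMulCoboundary₂ (f ^ H.index) := by
  obtain ⟨γ, hγ⟩ := exists_div_mulD₁₂_eq_one_of_restrictCochain hres
  have hfγ := isMulCocycle₂_div_mulD₁₂ hf γ
  obtain ⟨β, hβ⟩ := exists_div_mulD₁₂_eq_one_right_of_eq_one hfγ hγ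
  have hpow := isMulCoboundary₂_pow_index_of_eq_one_right (isMulCocycle₂_div_mulD₁₂ hfγ β) hβ
  rwa [div_pow, div_pow, ← map_pow, ← map_pow, isMulCoboundary₂_div_mulD₁₂_iff,
    isMulCoboundary₂_div_mulD₁₂_iff] at hpow

theorem isMulCoboundary₂_of_restrictCochain_of_coprime_index [H.FiniteIndex] [K.FiniteIndex]
    (hHK : H.index.Coprime K.index) (hf : IsMulCocycle₂ f)
    (hH : IsMulCoboundary₂ (restrictCochain H f)) (hK : IsMulCoboundary₂ (restrictCochain K f)) :
    IsMulCoboundary₂ f :=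
  isMulCoboundary₂_of_pow_of_pow hHK (isMulCoboundary₂_pow_index hf hH)
    (isMulCoboundary₂_pow_index hf hK)

end Transfer

section Cyclic

variable {G M : Type*} [Group G] [CommGroup M] {f : G × G → M} {g : G}

/-- The scalar by which the `k`-th power of the lift of `g` differs from the lift of `gᵏ`, in the
extension of `G` by `M` defined by a normalized 2-cocycle `f`. -/
def powScalar (f : G × G → M) (g : G) (k : ℕ) : M := ∏ i ∈ Finset.range k, f (g ^ i, g)

/-- The scalar defined by the `n`-th power of the lift of `g`, where `n` is the order of `g` (an
empty product if `g` has infinite order). For a 2-cocycle, its class modulo norms is the image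
under `H²(⟨g⟩, M) ≅ M^g / N(M)`. -/
def cyclicInvariant (g : G) : (G × G → M) →* M where
  toFun f := powScalar f g (orderOf g)
  map_one' := by simp [powScalar]
  map_mul' f f' := by simp only [powScalar, Pi.mul_apply, Finset.prod_mul_distrib]

theorem cyclicInvariant_apply (g : G) (f : G × G → M) :
    cyclicInvariant g f = ∏ i ∈ Finset.range (orderOf g), f (g ^ i, g) := rfl

theorem prod_range_orderOf_div_succ (g : G) (F : G → M) :
    ∏ i ∈ Finset.range (orderOf g), F (g ^ i) / F (g ^ (i + 1)) = 1 := by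
  rw [Finset.prod_range_div' (fun i ↦ F (g ^ i)), pow_orderOf_eq_one, pow_zero, div_self']

theorem periodic_powScalar (hone : cyclicInvariant g f = 1) :
    Function.Periodic (powScalar f g) (orderOf g) := fun k ↦ by
  rw [add_comm, powScalar, Finset.prod_range_add, ← cyclicInvariant_apply, hone, one_mul]
  simp only [pow_add, pow_orderOf_eq_one, one_mul, powScalar]

theorem powScalar_eq_of_pow_eq (hone : cyclicInvariant g f = 1) {j k : ℕ} (hjk : g ^ j = g ^ k) :
    powScalar f g j = powScalar f g k := by
  rw [← (periodic_powScalar hone).map_mod_nat j, ← (periodic_powScalar hone).map_mod_nat k,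
    pow_eq_pow_iff_modEq.1 hjk]

variable [MulDistribMulAction G M]

/-- The norm `m ↦ m * g m * ⋯ * gⁿ⁻¹ m`, where `n` is the order of `g`. -/
def cyclicNorm (g : G) (m : M) : M := ∏ i ∈ Finset.range (orderOf g), g ^ i • m

theorem cyclicInvariant_mulD₁₂ (g : G) (β : G → M) :
    cyclicInvariant g (mulD₁₂ β) = cyclicNorm g (β g) := by
  simp only [cyclicInvariant_apply, mulD₁₂_apply, ← pow_succ, div_mul_eq_mul_div, mul_div_assoc,
    Finset.prod_mul_distrib, prod_range_orderOf_div_succ, mul_one, cyclicNorm]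

theorem smul_cyclicInvariant (hf : IsMulCocycle₂ f) (g : G) :
    g • cyclicInvariant g f = cyclicInvariant g f := by
  have hcocycle (i : ℕ) : g • f (g ^ i, g) =
      f (g ^ i, g) / (f (g ^ i, g) / f (g ^ (i + 1), g)) * (f (g, g ^ i) / f (g, g ^ (i + 1))) := by
    rw [div_div_cancel, ← mul_div_assoc, eq_div_iff_mul_eq', pow_succ, ← hf, ← pow_succ', pow_succ]
  simp only [cyclicInvariant_apply, Finset.smul_prod', hcocycle, Finset.prod_mul_distrib,
    Finset.prod_div_distrib _ (fun i ↦ f (g ^ i, g) / f (g ^ (i + 1), g)),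
    prod_range_orderOf_div_succ g (fun x ↦ f (x, g)),
    prod_range_orderOf_div_succ g (fun x ↦ f (g, x)), div_one, mul_one]

theorem map_pow_pow_mul_powScalar (hf : IsMulCocycle₂ f) (g : G) (j k : ℕ) :
    f (g ^ j, g ^ k) * (powScalar f g j * g ^ j • powScalar f g k) =
      powScalar f g (j + k) * g ^ j • f (1, 1) := by
  induction k with
  | zero =>
    rw [pow_zero, map_one_snd_of_isMulCocycle₂ hf, add_zero, mul_comm]
    simp only [powScalar, Finset.range_zero, Finset.prod_empty, smul_one, mul_one]
  | succ k ih =>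
    have powScalar_succ (i : ℕ) : powScalar f g (i + 1) = powScalar f g i * f (g ^ i, g) :=
      Finset.prod_range_succ _ _
    have hcocycle := hf (g ^ j) (g ^ k) g
    rw [← pow_add, ← pow_succ] at hcocycle
    calc f (g ^ j, g ^ (k + 1)) * (powScalar f g j * g ^ j • powScalar f g (k + 1))
        = g ^ j • f (g ^ k, g) * f (g ^ j, g ^ (k + 1)) *
            (powScalar f g j * g ^ j • powScalar f g k) := by
          rw [powScalar_succ, smul_mul']
          ac_rfl
      _ = f (g ^ (j + k), g) *
            (f (g ^ j, g ^ k) * (powScalar f g j * g ^ j • powScalar f g k)) := by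
          rw [← hcocycle, mul_assoc]
      _ = powScalar f g (j + (k + 1)) * g ^ j • f (1, 1) := by
          rw [ih, ← add_assoc, powScalar_succ]
          ac_rfl

theorem isMulCoboundary₂_of_cyclicInvariant_eq_one (hf : IsMulCocycle₂ f)
    (hg : ∀ x, x ∈ Submonoid.powers g) (hone : cyclicInvariant g f = 1) :
    IsMulCoboundary₂ f := by
  have exists_pow_eq (x : G) : ∃ k : ℕ, g ^ k = x := hg x
  choose log pow_log using exists_pow_eq
  let β (x : G) : M := f (1, 1) / powScalar f g (log x)
  have hβ (k : ℕ) : β (g ^ k) = f (1, 1) / powScalar f g k := by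
    simp only [β, powScalar_eq_of_pow_eq hone (pow_log (g ^ k))]
  refine ⟨β, fun x y ↦ ?_⟩
  rw [← pow_log x, ← pow_log y]
  generalize log x = j, log y = k
  calc g ^ j • β (g ^ k) / β (g ^ j * g ^ k) * β (g ^ j)
      = powScalar f g (j + k) * g ^ j • f (1, 1) / (powScalar f g j * g ^ j • powScalar f g k) := by
        rw [← pow_add, hβ, hβ, hβ, smul_div', div_div_div_eq, div_mul_div_comm,
          div_eq_div_iff_mul_eq_mul]
        ac_rfl
    _ = f (g ^ j, g ^ k) := by
        rw [← map_pow_pow_mul_powScalar hf, mul_div_cancel_right]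

theorem isMulCoboundary₂_iff_exists_cyclicNorm_eq (hf : IsMulCocycle₂ f)
    (hg : ∀ x, x ∈ Submonoid.powers g) :
    IsMulCoboundary₂ f ↔ ∃ m, cyclicNorm g m = cyclicInvariant g f := by
  constructor
  · rw [← mem_range_mulD₁₂]
    rintro ⟨β, rfl⟩
    exact ⟨β g, (cyclicInvariant_mulD₁₂ g β).symm⟩
  · rintro ⟨m, hm⟩
    rw [← isMulCoboundary₂_div_mulD₁₂_iff (fun _ ↦ m)]
    refine isMulCoboundary₂_of_cyclicInvariant_eq_one (isMulCocycle₂_div_mulD₁₂ hf _) hg ?_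
    rw [map_div, cyclicInvariant_mulD₁₂, hm, div_self']

theorem isMulCoboundary₂_restrictCochain_zpowers_iff (hf : IsMulCocycle₂ f)
    (hg : IsOfFinOrder g) :
    IsMulCoboundary₂ (restrictCochain (Subgroup.zpowers g) f) ↔
      ∃ m, cyclicNorm g m = cyclicInvariant g f := by
  let γ : Subgroup.zpowers g := ⟨g, Subgroup.mem_zpowers g⟩
  have hγ (x : Subgroup.zpowers g) : x ∈ Submonoid.powers γ := by
    obtain ⟨k, hk⟩ := hg.mem_powers_iff_mem_zpowers.2 x.2
    exact ⟨k, Subtype.ext hk⟩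
  have horder : orderOf γ = orderOf g := Subgroup.orderOf_mk g _
  rw [isMulCoboundary₂_iff_exists_cyclicNorm_eq (isMulCocycle₂_restrictCochain hf _) hγ]
  simp only [cyclicNorm, cyclicInvariant_apply, horder]
  rfl

end Cyclic

section ConjTwisted

theorem exists_mul_star_eq_or_eq_neg {a : ℂˣ} (ha : star a = a) :
    ∃ m : ℂˣ, m * star m = a ∨ m * star m = -a := by
  obtain ⟨x, hx⟩ : ∃ x : ℝ, (a : ℂ) = x := Complex.conj_eq_iff_real.1 (congrArg Units.val ha)
  have hx_pos : 0 < |x| := abs_pos.2 fun h ↦ a.ne_zero (by rw [hx, h, Complex.ofReal_zero])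
  have hsqrt : ((√|x| : ℝ) : ℂ) ≠ 0 := Complex.ofReal_ne_zero.2 (Real.sqrt_pos.2 hx_pos).ne'
  have hnorm : ((√|x| : ℝ) : ℂ) * star ((√|x| : ℝ) : ℂ) = (|x| : ℝ) := by
    rw [Complex.star_def, Complex.conj_ofReal, ← Complex.ofReal_mul, Real.mul_self_sqrt hx_pos.le]
  refine ⟨Units.mk0 _ hsqrt, ?_⟩
  simp only [Units.ext_iff, Units.val_mul, Units.coe_star, Units.val_neg, Units.val_mk0, hnorm, hx]
  exact_mod_cast abs_choice x

theorem mul_star_ne_neg_one (m : ℂˣ) : m * star m ≠ -1 := fun h ↦ by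
  have hnormSq : Complex.normSq m = (-1 : ℝ) := by
    rw [← Complex.ofReal_inj, ← Complex.mul_conj, Complex.ofReal_neg, Complex.ofReal_one]
    exact congrArg Units.val h
  linarith [Complex.normSq_nonneg (m : ℂ)]

theorem isMulCoboundary₂_of_isCyclic_of_smul_eq {G : Type*} [Group G] [Finite G] [IsCyclic G]
    [MulDistribMulAction G ℂˣ] {f : G × G → ℂˣ} (hf : IsMulCocycle₂ f)
    (htriv : ∀ (g : G) (z : ℂˣ), g • z = z) : IsMulCoboundary₂ f := by
  obtain ⟨g, hg⟩ := IsCyclic.exists_monoid_generator (α := G)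
  obtain ⟨z, hz⟩ := IsAlgClosed.exists_pow_nat_eq
    ((cyclicInvariant g f : ℂˣ) : ℂ) (orderOf_pos g)
  have hz_ne : z ≠ 0 := by
    rintro rfl
    exact (cyclicInvariant g f).ne_zero (hz ▸ zero_pow (orderOf_pos g).ne')
  refine (isMulCoboundary₂_iff_exists_cyclicNorm_eq hf hg).2 ⟨Units.mk0 z hz_ne, Units.ext ?_⟩
  simp only [cyclicNorm, htriv, Finset.prod_const, Finset.card_range, Units.val_pow_eq_pow_val,
    Units.val_mk0, hz]

variable {G : Type*} [Group G]

/-- The 2-cochain taking the value `-1` at pairs of elements on which `χ` is `-1`, and `1`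
elsewhere: the Haldane phase of the group `G` with time reversal given by `χ`. -/
def signCochain (χ : G →* ℤˣ) : G × G → ℂˣ := fun p ↦ if χ p.1 = -1 ∧ χ p.2 = -1 then -1 else 1

variable {χ : G →* ℤˣ} {τ : G}

theorem exists_orderOf_eq_two (hχ : Function.Surjective χ) (hodd : Odd (Nat.card χ.ker)) :
    ∃ τ, χ τ = -1 ∧ orderOf τ = 2 := by
  obtain ⟨t, ht⟩ := hχ (-1)
  have ht_sq : t ^ 2 ∈ χ.ker := by rw [MonoidHom.mem_ker, map_pow, ht, neg_one_sq]
  have hτ : χ (t ^ Nat.card χ.ker) = -1 := by rw [map_pow, ht, hodd.neg_one_pow]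
  refine ⟨t ^ Nat.card χ.ker, hτ, orderOf_eq_prime ?_ ?_⟩
  · rw [← pow_mul, mul_comm, pow_mul]
    exact congrArg Subtype.val (pow_card_eq_one' (x := (⟨t ^ 2, ht_sq⟩ : χ.ker)))
  · intro h
    rw [h, map_one] at hτ
    exact absurd hτ (by decide)

theorem index_ker_eq_two (hχ : Function.Surjective χ) : χ.ker.index = 2 := by
  rw [Subgroup.index_ker, MonoidHom.range_eq_top.2 hχ, Subgroup.card_top,
    Nat.card_eq_fintype_card, Fintype.card_units_int]

theorem index_zpowers_eq_card_ker (hχ : Function.Surjective χ) (hτ : orderOf τ = 2) :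
    (Subgroup.zpowers τ).index = Nat.card χ.ker := by
  have hcard := (Subgroup.zpowers τ).card_mul_index.trans χ.ker.card_mul_index.symm
  rw [Nat.card_zpowers, hτ, index_ker_eq_two hχ, mul_comm] at hcard
  exact Nat.eq_of_mul_eq_mul_right two_pos hcard

theorem cyclicInvariant_signCochain (hχτ : χ τ = -1) (hτ : orderOf τ = 2) :
    cyclicInvariant τ (signCochain χ) = -1 := by
  simp [cyclicInvariant_apply, hτ, Finset.prod_range_succ, signCochain, hχτ]

variable [MulDistribMulAction G ℂˣ] {f : G × G → ℂˣ}
  (hsmul : ∀ (g : G) (z : ℂˣ), g • z = if χ g = 1 then z else star z)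
include hsmul

theorem isMulCocycle₂_signCochain : IsMulCocycle₂ (signCochain χ) := fun g h j ↦ by
  have hstar : star (-1 : ℂˣ) = -1 := Units.ext (by simp)
  rcases Int.units_eq_one_or (χ g) with hg | hg <;>
  rcases Int.units_eq_one_or (χ h) with hh | hh <;>
  rcases Int.units_eq_one_or (χ j) with hj | hj <;>
  simp [signCochain, hsmul, hg, hh, hj, hstar]

theorem cyclicNorm_eq_mul_star (hχτ : χ τ = -1) (hτ : orderOf τ = 2) (m : ℂˣ) :
    cyclicNorm τ m = m * star m := by
  have hτm : τ • m = star m := by rw [hsmul, hχτ, if_neg (by decide)]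
  rw [cyclicNorm, hτ, Finset.prod_range_succ, Finset.prod_range_one, pow_zero, one_smul, pow_one,
    hτm]

theorem not_isMulCoboundary₂_signCochain (hχτ : χ τ = -1) (hτ : orderOf τ = 2) :
    ¬ IsMulCoboundary₂ (signCochain χ) := by
  rw [← mem_range_mulD₁₂]
  rintro ⟨β, hβ⟩
  refine mul_star_ne_neg_one (β τ) ?_
  rw [← cyclicNorm_eq_mul_star hsmul hχτ hτ, ← cyclicInvariant_mulD₁₂, hβ,
    cyclicInvariant_signCochain hχτ hτ]

theorem isMulCoboundary₂_of_mul_star_eq_cyclicInvariant (hχ : Function.Surjective χ)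
    [IsCyclic χ.ker] (hodd : Odd (Nat.card χ.ker)) (hχτ : χ τ = -1) (hτ : orderOf τ = 2)
    (hf : IsMulCocycle₂ f) {m : ℂˣ} (hm : m * star m = cyclicInvariant τ f) :
    IsMulCoboundary₂ f := by
  have hcoprime : χ.ker.index.Coprime (Subgroup.zpowers τ).index := by
    rw [index_ker_eq_two hχ, index_zpowers_eq_card_ker hχ hτ]
    exact hodd.coprime_two_left
  have : Finite χ.ker := Nat.finite_of_card_ne_zero hodd.pos.ne'
  have : (Subgroup.zpowers τ).FiniteIndex :=
    ⟨index_zpowers_eq_card_ker hχ hτ ▸ hodd.pos.ne'⟩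
  refine isMulCoboundary₂_of_restrictCochain_of_coprime_index hcoprime hf ?_ ?_
  · refine isMulCoboundary₂_of_isCyclic_of_smul_eq (isMulCocycle₂_restrictCochain hf _) ?_
    intro g z
    rw [Subgroup.smul_def, hsmul, if_pos (MonoidHom.mem_ker.1 g.2)]
  · rw [isMulCoboundary₂_restrictCochain_zpowers_iff hf (orderOf_pos_iff.1 (hτ ▸ two_pos))]
    exact ⟨m, (cyclicNorm_eq_mul_star hsmul hχτ hτ m).trans hm⟩

theorem H2_S3T_general (hχ : Function.Surjective χ) [IsCyclic χ.ker]
    (hodd : Odd (Nat.card χ.ker)) :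
    IsMulCocycle₂ (signCochain χ) ∧ ¬ IsMulCoboundary₂ (signCochain χ) ∧
      ∀ f : G × G → ℂˣ, IsMulCocycle₂ f →
        IsMulCoboundary₂ f ∨ IsMulCoboundary₂ (f / signCochain χ) := by
  obtain ⟨τ, hχτ, hτ⟩ := exists_orderOf_eq_two hχ hodd
  have hcocycle := isMulCocycle₂_signCochain hsmul
  refine ⟨hcocycle, not_isMulCoboundary₂_signCochain hsmul hχτ hτ, fun f hf ↦ ?_⟩
  have hstar : star (cyclicInvariant τ f) = cyclicInvariant τ f := by
    simpa [hsmul, hχτ] using smul_cyclicInvariant hf τ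
  obtain ⟨m, hm | hm⟩ := exists_mul_star_eq_or_eq_neg hstar
  · exact .inl (isMulCoboundary₂_of_mul_star_eq_cyclicInvariant hsmul hχ hodd hχτ hτ hf hm)
  · refine .inr (isMulCoboundary₂_of_mul_star_eq_cyclicInvariant hsmul hχ hodd hχτ hτ
      (isMulCocycle₂_div hf hcocycle) (hm.trans ?_))
    rw [map_div, cyclicInvariant_signCochain hχτ hτ, div_neg, div_one]

end ConjTwisted

section SymmetricGroup

theorem tAct_eq_ite (g : S3) (z : ℂˣ) :
    tAct g z = if Equiv.Perm.sign g = 1 then z else star z := by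
  by_cases hg : Equiv.Perm.sign g = 1
  · simp [tAct, s, hg]
  · simp only [tAct, s, hg, if_false, one_ne_zero]
    rfl

/-- The module `ℂˣ_T` of the anti-linear group `S₃ᵀ`: the action of `S3` on `ℂˣ` through `tAct`. -/
instance instTwistedAction : MulDistribMulAction S3 ℂˣ where
  smul := tAct
  one_smul z := by
    change tAct 1 z = z
    rw [tAct_eq_ite, map_one, if_pos rfl]
  mul_smul g h z := by
    change tAct (g * h) z = tAct g (tAct h z)
    rcases Int.units_eq_one_or (Equiv.Perm.sign g) with hg | hg <;>
    rcases Int.units_eq_one_or (Equiv.Perm.sign h) with hh | hh <;>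
    simp [tAct_eq_ite, hg, hh]
  smul_one g := by
    change tAct g 1 = 1
    rw [tAct_eq_ite, star_one, ite_self]
  smul_mul g z w := by
    change tAct g (z * w) = tAct g z * tAct g w
    simp only [tAct_eq_ite, star_mul']
    split_ifs <;> rfl

theorem isTwisted2Cocycle_iff (ψ : S3 → S3 → ℂˣ) :
    IsTwisted2Cocycle ψ ↔ IsMulCocycle₂ (Function.uncurry ψ) :=
  forall₃_congr fun _ _ _ ↦ eq_comm

theorem isTwisted2Coboundary_iff (ψ : S3 → S3 → ℂˣ) :
    IsTwisted2Coboundary ψ ↔ IsMulCoboundary₂ (Function.uncurry ψ) :=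
  exists_congr fun β ↦ forall₂_congr fun g h ↦ by
    rw [← div_eq_mul_inv]
    exact eq_comm

theorem cohomologous_iff (ψ ψ' : S3 → S3 → ℂˣ) :
    Cohomologous ψ ψ' ↔ IsMulCoboundary₂ (Function.uncurry ψ / Function.uncurry ψ') := by
  rw [Cohomologous, isTwisted2Coboundary_iff]
  simp only [← div_eq_mul_inv]
  rfl

theorem cohomologous_one_iff (ψ : S3 → S3 → ℂˣ) :
    Cohomologous ψ (fun _ _ ↦ 1) ↔ IsMulCoboundary₂ (Function.uncurry ψ) := by
  simp only [Cohomologous, inv_one, mul_one, isTwisted2Coboundary_iff]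

theorem uncurry_ψ₀ : Function.uncurry ψ₀ = signCochain Equiv.Perm.sign := rfl

instance isCyclic_ker_sign : IsCyclic (Equiv.Perm.sign : S3 →* ℤˣ).ker :=
  alternatingGroup.isCyclic_of_card_le_three (Nat.card_fin 3).le

theorem odd_card_ker_sign : Odd (Nat.card (Equiv.Perm.sign : S3 →* ℤˣ).ker) := by
  change Odd (Nat.card (alternatingGroup (Fin 3)))
  rw [nat_card_alternatingGroup, Nat.card_fin]
  decide

/-- `H²(S₃ᵀ, ℂˣ_T) ≅ ℤ/2`: `ψ₀` is a twisted 2-cocycle, it is not a twisted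
2-coboundary, and every twisted 2-cocycle on `S₃` is cohomologous to `1` or to `ψ₀`. -/
theorem H2_S3T :
    IsTwisted2Cocycle ψ₀ ∧ ¬ IsTwisted2Coboundary ψ₀ ∧
      ∀ ψ, IsTwisted2Cocycle ψ →
        Cohomologous ψ (fun _ _ => 1) ∨ Cohomologous ψ ψ₀ := by
  obtain ⟨hcocycle, hnontrivial, hclass⟩ := uncurry_ψ₀ ▸
    H2_S3T_general tAct_eq_ite (Equiv.Perm.sign_surjective (Fin 3)) odd_card_ker_sign
  exact ⟨(isTwisted2Cocycle_iff ψ₀).2 hcocycle, mt (isTwisted2Coboundary_iff ψ₀).1 hnontrivial,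
    fun ψ hψ ↦ (hclass _ ((isTwisted2Cocycle_iff ψ).1 hψ)).imp (cohomologous_one_iff ψ).2
      (cohomologous_iff ψ ψ₀).2⟩

end SymmetricGroup

end
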